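/- arXiv:math/0609339 — 2 statements merged into one kernel-verified Lean document; each statement's English description precedes it below -/
import Mathlib

section
/- Let T and U be trees, each with n vertices, such that N_λ(T) = N_λ(U) for every partition λ of n (equivalently, X_T = X_U). Then for every i ≥ 1, the number of i-edge paths in T equals the number of i-edge paths in U, where an i-edge path is a set P of i edges forming a subtree in which every vertex is incident to at most two edges of P. -/
open SimpleGraph Finset

variable {V : Type*} {W : Type*}

open Classical in
/-- `edgeSetType A` : the "type" of the edge set `A`, i.e. the partition (as a multiset of
positive integers) of `#V` whose parts are the orders of the connected components of the
spanning subgraph `(V, A)`. -/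
noncomputable def edgeSetType [Fintype V] (A : Finset (Sym2 V)) : Multiset ℕ :=
  ((Finset.univ : Finset V).image
    (fun v => (SimpleGraph.fromEdgeSet (↑A : Set (Sym2 V))).connectedComponentMk v)).val.map
    (fun c => c.supp.ncard)

open Classical in
/-- `cCoeff G λ = Σ_{A ⊆ E(G), type(A) = λ} (−1)^{#A}`, the coefficient of the power-sum
symmetric function `p_λ` in the chromatic symmetric function `X_G`. -/
noncomputable def cCoeff [Fintype V] (G : SimpleGraph V) (lam : Multiset ℕ) : ℤ :=
  ∑ A ∈ (Finset.univ : Finset (Sym2 V)).powerset,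
    if (↑A : Set (Sym2 V)) ⊆ G.edgeSet ∧ edgeSetType A = lam then (-1 : ℤ) ^ A.card else 0

open Classical in
/-- `NCoeff G λ` : the number of edge sets `A ⊆ E(G)` with `type(A) = λ`. -/
noncomputable def NCoeff [Fintype V] (G : SimpleGraph V) (lam : Multiset ℕ) : ℕ :=
  ((Finset.univ : Finset (Sym2 V)).powerset.filter
    (fun (A : Finset (Sym2 V)) => (↑A : Set (Sym2 V)) ⊆ G.edgeSet ∧ edgeSetType A = lam)).card

/-- `S` is a subtree of `T`: a nonempty set of edges of `T` such that the subgraph consisting of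
the edges of `S` together with their endpoints is connected. -/
def IsSubtreeSet (T : SimpleGraph V) (S : Set (Sym2 V)) : Prop :=
  S.Nonempty ∧ S ⊆ T.edgeSet ∧
    ((SimpleGraph.fromEdgeSet S).induce {v | ∃ e ∈ S, v ∈ e}).Connected

/-- The leaf edges of an edge set `S` : edges of `S` having an endpoint incident to no other
edge of `S`. -/
def leafEdges (S : Set (Sym2 V)) : Set (Sym2 V) :=
  {e | e ∈ S ∧ ∃ v ∈ e, ∀ e' ∈ S, v ∈ e' → e' = e}

/-- The connector `K(A)` of a (nonempty) edge set `A` of a tree `T`: the minimal subset `K` of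
`E(T) \ A` such that `A ∪ K` is a subtree of `T`. -/
def connector (T : SimpleGraph V) (A : Set (Sym2 V)) : Set (Sym2 V) :=
  ⋂₀ {B | B ⊆ T.edgeSet \ A ∧ IsSubtreeSet T (A ∪ B)}

open Classical in
/-- `pathCount T i` : the number of `i`-edge paths in `T`, where an `i`-edge path is a set `P`
of `i` edges forming a subtree in which every vertex is incident to at most two edges of `P`. -/
noncomputable def pathCount [Fintype V] (T : SimpleGraph V) (i : ℕ) : ℕ :=
  ((Finset.univ : Finset (Sym2 V)).powerset.filter
    (fun (P : Finset (Sym2 V)) => P.card = i ∧ IsSubtreeSet T (↑P : Set (Sym2 V)) ∧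
      ∀ v : V, (P.filter (fun e => v ∈ e)).card ≤ 2)).card

/-!
In a forest with edge set `E`, two connected vertices remain connected in `A ⊆ E` exactly when `A`
contains the path joining them. Hence, by the binomial theorem, the sum of
`a ^ #A * b ^ (#E - #A)` over all `A ⊆ E`, weighted by the number of ordered pairs of vertices
connected in `A`, equals the sum of `a ^ d * (a + b) ^ (#E - d)` over all ordered pairs of connected
vertices, where `d` is their distance. The type of `A` determines this weight, the sum of the
squares of its parts, and also `#A`, which is the number of vertices minus the number of parts.
At `a = X`, `b = 1 - X` the right-hand side is the generating polynomial of the distances,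
and its coefficient at `i ≥ 1` counts every `i`-edge path twice, once for each order of its ends.
-/

lemma sum_Icc_pow_mul_pow {α R : Type*} [DecidableEq α] [CommSemiring R] {P E : Finset α}
    (h : P ⊆ E) (a b : R) :
    ∑ A ∈ Icc P E, a ^ #A * b ^ (#E - #A) = a ^ #P * (a + b) ^ (#E - #P) := by
  have union_injOn : Set.InjOn (P ∪ ·) ((E \ P).powerset : Set (Finset α)) := by
    intro B hB C hC hBC
    have hPB : Disjoint P B := disjoint_sdiff.mono_right (mem_powerset.mp hB)
    have hPC : Disjoint P C := disjoint_sdiff.mono_right (mem_powerset.mp hC)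
    rw [← union_sdiff_cancel_left hPB, ← union_sdiff_cancel_left hPC]
    exact congrArg (· \ P) hBC
  rw [Icc_eq_image_powerset h, sum_image union_injOn, ← card_sdiff_of_subset h,
    ← sum_pow_mul_eq_add_pow, mul_sum]
  refine sum_congr rfl fun B hB => ?_
  have hPB : Disjoint P B := disjoint_sdiff.mono_right (mem_powerset.mp hB)
  rw [card_union_of_disjoint hPB, card_sdiff_of_subset h, pow_add, mul_assoc, Nat.sub_sub]

/-! ### Components of a forest -/

lemma sum_ncard_supp_mul [Fintype V] (G : SimpleGraph V) [Fintype G.ConnectedComponent]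
    (f : G.ConnectedComponent → ℕ) : ∑ c : G.ConnectedComponent, c.supp.ncard * f c =
      ∑ v, f (G.connectedComponentMk v) := by
  classical
  rw [← Finset.sum_fiberwise univ G.connectedComponentMk]
  refine sum_congr rfl fun c _ => ?_
  rw [sum_congr rfl fun v hv => by rw [(mem_filter.mp hv).2], sum_const, smul_eq_mul,
    ← Set.ncard_coe_finset]
  congr
  ext v
  simp

open Classical in
lemma two_mul_ncard_supp_of_isAcyclic [Fintype V] {G : SimpleGraph V} (hG : G.IsAcyclic)
    (c : G.ConnectedComponent) :
    2 * c.supp.ncard = ∑ v with G.connectedComponentMk v = c, G.degree v + 2 := by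
  have neighborSet_subset (v : c.supp) : G.neighborSet v ⊆ c.supp := fun w hw =>
    (ConnectedComponent.connectedComponentMk_eq_of_adj hw).symm.trans v.2
  have isTree : (G.induce c.supp).IsTree := hG.isTree_connectedComponent c
  have degree_eq (v : c.supp) : (G.induce c.supp).degree v = G.degree v := by
    convert degree_induce_of_neighborSet_subset (neighborSet_subset v)
  calc
    2 * c.supp.ncard = 2 * Fintype.card c.supp := by
      rw [← Set.toFinset_card, ← Set.ncard_eq_toFinset_card']
    _ = 2 * #(G.induce c.supp).edgeFinset + 2 := by rw [← isTree.card_edgeFinset, mul_add]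
    _ = ∑ v : c.supp, G.degree v + 2 := by
      simp only [← sum_degrees_eq_twice_card_edges, degree_eq]
    _ = ∑ v with G.connectedComponentMk v = c, G.degree v + 2 := by
      rw [sum_subtype (p := (· ∈ c.supp)) {v | G.connectedComponentMk v = c} (by simp) (G.degree ·)]

lemma card_edgeSet_add_card_connectedComponent [Finite V] {G : SimpleGraph V}
    (hG : G.IsAcyclic) :
    Nat.card G.edgeSet + Nat.card G.ConnectedComponent = Nat.card V := by
  classical
  have := Fintype.ofFinite V
  have handshake :=
    calc
      2 * Fintype.card V = ∑ c : G.ConnectedComponent, 2 * c.supp.ncard := by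
        simpa [← mul_sum] using (sum_ncard_supp_mul G fun _ => 1).symm
      _ = ∑ c, (∑ v with G.connectedComponentMk v = c, G.degree v + 2) :=
        sum_congr rfl fun c _ => two_mul_ncard_supp_of_isAcyclic hG c
      _ = 2 * #G.edgeFinset + 2 * Fintype.card G.ConnectedComponent := by
        rw [sum_add_distrib, Finset.sum_fiberwise univ G.connectedComponentMk (G.degree ·),
          sum_degrees_eq_twice_card_edges, sum_const, card_univ, smul_eq_mul, mul_comm _ 2]
  simp only [Nat.card_eq_fintype_card, ← edgeFinset_card]
  omega

open Classical in
lemma card_reachable_eq_sum_ncard_sq [Fintype V] (G : SimpleGraph V)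
    [Fintype G.ConnectedComponent] :
    #{p : V × V | G.Reachable p.1 p.2} = ∑ c : G.ConnectedComponent, c.supp.ncard ^ 2 := by
  simp only [sq, sum_ncard_supp_mul, card_filter, Fintype.sum_prod_type]
  refine sum_congr rfl fun v _ => ?_
  rw [← card_filter, ← Set.ncard_coe_finset]
  congr
  ext w
  simp [ConnectedComponent.eq, reachable_comm]

/-! ### The type of an edge set -/

lemma edgeSetType_eq_map_univ [Fintype V] (A : Finset (Sym2 V))
    [Fintype (fromEdgeSet (A : Set (Sym2 V))).ConnectedComponent] :
    edgeSetType A = (univ : Finset (fromEdgeSet (A : Set (Sym2 V))).ConnectedComponent).val.map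
      fun c => c.supp.ncard := by
  classical
  unfold edgeSetType
  congr 2
  exact image_univ_of_surjective Quot.mk_surjective

lemma sum_edgeSetType [Fintype V] (A : Finset (Sym2 V)) :
    (edgeSetType A).sum = Fintype.card V := by
  rw [edgeSetType_eq_map_univ]
  simpa using sum_ncard_supp_mul (fromEdgeSet (A : Set (Sym2 V))) fun _ => 1

lemma pos_of_mem_edgeSetType [Fintype V] {A : Finset (Sym2 V)} {m : ℕ} (hm : m ∈ edgeSetType A) :
    0 < m := by
  rw [edgeSetType_eq_map_univ] at hm
  obtain ⟨c, -, rfl⟩ := Multiset.mem_map.mp hm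
  exact (Set.ncard_pos (Set.toFinite _)).mpr c.nonempty_supp

open Classical in
lemma sum_map_sq_edgeSetType [Fintype V] (A : Finset (Sym2 V)) :
    ((edgeSetType A).map (· ^ 2)).sum =
      #{p : V × V | (fromEdgeSet (A : Set (Sym2 V))).Reachable p.1 p.2} := by
  have := Fintype.ofFinite (fromEdgeSet (A : Set (Sym2 V))).ConnectedComponent
  rw [edgeSetType_eq_map_univ, Multiset.map_map]
  convert (card_reachable_eq_sum_ncard_sq (fromEdgeSet (A : Set (Sym2 V)))).symm
  rfl

lemma fromEdgeSet_le_of_subset {G : SimpleGraph V} {S : Set (Sym2 V)} (hS : S ⊆ G.edgeSet) :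
    fromEdgeSet S ≤ G :=
  (fromEdgeSet_le G).mpr (Set.sdiff_subset.trans hS)

lemma edgeSet_fromEdgeSet_of_subset {G : SimpleGraph V} {S : Set (Sym2 V)} (hS : S ⊆ G.edgeSet) :
    (fromEdgeSet S).edgeSet = S := by
  rw [edgeSet_fromEdgeSet, sdiff_eq_left, ← Set.subset_compl_iff_disjoint_right]
  exact fun e he => G.not_isDiag_of_mem_edgeSet (hS he)

lemma card_add_card_edgeSetType [Fintype V] {G : SimpleGraph V} (hG : G.IsAcyclic)
    {A : Finset (Sym2 V)} (hA : (A : Set (Sym2 V)) ⊆ G.edgeSet) :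
    #A + (edgeSetType A).card = Fintype.card V := by
  have key := card_edgeSet_add_card_connectedComponent (hG.anti (fromEdgeSet_le_of_subset hA))
  rw [edgeSet_fromEdgeSet_of_subset hA] at key
  rw [edgeSetType_eq_map_univ, Multiset.card_map]
  simpa [Nat.card_eq_fintype_card] using key

open Classical in
lemma count_map_edgeSetType [Fintype V] (G : SimpleGraph V) (lam : Multiset ℕ) :
    (G.edgeFinset.powerset.val.map edgeSetType).count lam = NCoeff G lam := by
  rw [Multiset.count_map, ← filter_val, ← card_def, NCoeff]
  congr 1
  ext A
  simp [← coe_subset, eq_comm]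

open Classical in
lemma map_edgeSetType_eq_of_NCoeff_eq [Fintype V] [Fintype W] {T : SimpleGraph V}
    {U : SimpleGraph W} {n : ℕ} (hVn : Fintype.card V = n) (hWn : Fintype.card W = n)
    (hN : ∀ lam : Multiset ℕ, lam.sum = n → (∀ m ∈ lam, 0 < m) → NCoeff T lam = NCoeff U lam) :
    T.edgeFinset.powerset.val.map edgeSetType = U.edgeFinset.powerset.val.map edgeSetType := by
  ext lam
  by_cases hlam : lam.sum = n ∧ ∀ m ∈ lam, 0 < m
  · rw [count_map_edgeSetType, count_map_edgeSetType, hN lam hlam.1 hlam.2]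
  · rw [Multiset.count_eq_zero_of_notMem, Multiset.count_eq_zero_of_notMem]
    all_goals
      intro hmem
      obtain ⟨A, -, rfl⟩ := Multiset.mem_map.mp hmem
      exact hlam ⟨by rw [sum_edgeSetType]; assumption, fun m => pos_of_mem_edgeSetType⟩

/-! ### Edge sets of paths -/

section Paths

variable {G H : SimpleGraph V} {u v w x : V}

/-- `P` is the edge set of a path of `G` with ends `u` and `v`. Working with edge sets instead of
walks makes paths of different subgraphs, and the two orientations of a path, comparable; for
`u = v` the only such `P` is `∅`. -/
def IsPathBetween (G : SimpleGraph V) (u v : V) (P : Set (Sym2 V)) : Prop :=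
  ∃ p : G.Walk u v, p.IsPath ∧ p.edgeSet = P

namespace IsPathBetween

variable {P Q : Set (Sym2 V)}

lemma symm : IsPathBetween G u v P → IsPathBetween G v u P := by
  rintro ⟨p, hp, rfl⟩
  exact ⟨p.reverse, hp.reverse, p.edgeSet_reverse⟩

lemma reachable : IsPathBetween G u v P → G.Reachable u v := by
  rintro ⟨p, -, -⟩
  exact p.reachable

lemma subset_edgeSet : IsPathBetween G u v P → P ⊆ G.edgeSet := by
  rintro ⟨p, -, rfl⟩
  exact fun e he => p.edges_subset_edgeSet he

lemma mono (hHG : H ≤ G) : IsPathBetween H u v P → IsPathBetween G u v P := by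
  rintro ⟨p, hp, rfl⟩
  exact ⟨p.mapLe hHG, hp.mapLe hHG, p.edgeSet_mapLe_eq_edgeSet hHG⟩

lemma unique (hG : G.IsAcyclic) :
    IsPathBetween G u v P → IsPathBetween G u v Q → P = Q := by
  rintro ⟨p, hp, rfl⟩ ⟨q, hq, rfl⟩
  exact congrArg (fun r : G.Path u v => (r : G.Walk u v).edgeSet)
    ((hG.subsingleton_path u v).elim ⟨p, hp⟩ ⟨q, hq⟩)

lemma reachable_iff_subset (hG : G.IsAcyclic) (hHG : H ≤ G) (hP : IsPathBetween G u v P) :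
    H.Reachable u v ↔ P ⊆ H.edgeSet := by
  constructor
  · intro h
    obtain ⟨p, hp⟩ := h.exists_isPath
    have hPH : IsPathBetween H u v p.edgeSet := ⟨p, hp, rfl⟩
    exact unique hG (hPH.mono hHG) hP ▸ hPH.subset_edgeSet
  · obtain ⟨p, -, rfl⟩ := hP
    exact fun h => (p.transfer H fun e he => h he).reachable

lemma ncard_eq_dist (hG : G.IsAcyclic) (hP : IsPathBetween G u v P) : P.ncard = G.dist u v := by
  classical
  obtain ⟨p, hp, hdist⟩ := hP.reachable.exists_path_of_dist
  rw [← unique hG ⟨p, hp, rfl⟩ hP, ← p.coe_edges_toFinset, Set.ncard_coe_finset,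
    List.toFinset_card_of_nodup hp.isTrail.edges_nodup, p.length_edges, hdist]

end IsPathBetween

lemma existsUnique_isPathBetween (hG : G.IsAcyclic) (h : G.Reachable u v) :
    ∃! P : Finset (Sym2 V), IsPathBetween G u v P := by
  classical
  obtain ⟨p, hp⟩ := h.exists_isPath
  have hpP : IsPathBetween G u v p.edges.toFinset := ⟨p, hp, p.coe_edges_toFinset.symm⟩
  exact ⟨_, hpP, fun Q hQ => coe_injective (hQ.unique hG hpP)⟩

lemma isChordless_of_isAcyclic (hG : G.IsAcyclic) (p : G.Walk u v) : p.IsChordless := by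
  classical
  refine Walk.isChordless_iff_forall_mem_edges.mpr fun w x hw hx hwx => ?_
  have mem_edges_of_walk :=
    isBridge_iff_forall_walk_mem_edges.mp (isAcyclic_iff_forall_adj_isBridge.mp hG hwx)
  have hmem := mem_edges_of_walk ((p.takeUntil w hw).reverse.append (p.takeUntil x hx))
  rw [Walk.edges_append, Walk.edges_reverse, List.mem_append, List.mem_reverse] at hmem
  exact hmem.elim (p.edges_takeUntil_subset_edges hw ·) (p.edges_takeUntil_subset_edges hx ·)

lemma ncard_neighborSet_toSubgraph_eq_two {p : G.Walk u v} (hp : p.IsPath) (hw : w ∈ p.support)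
    (hwu : w ≠ u) (hwv : w ≠ v) : (p.toSubgraph.neighborSet w).ncard = 2 := by
  obtain ⟨i, rfl, hi⟩ := Walk.mem_support_iff_exists_getVert.mp hw
  have hi0 : i ≠ 0 := fun h => hwu (by rw [h, p.getVert_zero])
  have hil : i ≠ p.length := fun h => hwv (by rw [h, p.getVert_length])
  exact hp.ncard_neighborSet_toSubgraph_internal_eq_two hi0 (hi.lt_of_ne hil)

lemma ncard_neighborSet_toSubgraph_le_two {p : G.Walk u v} (hp : p.IsPath) (w : V) :
    (p.toSubgraph.neighborSet w).ncard ≤ 2 := by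
  by_cases hnil : p.Nil
  · cases hnil
    simp
  by_cases hw : w ∈ p.support
  · by_cases hwu : w = u
    · rw [hwu, hp.neighborSet_toSubgraph_startpoint hnil, Set.ncard_singleton]
      exact one_le_two
    by_cases hwv : w = v
    · rw [hwv, hp.neighborSet_toSubgraph_endpoint hnil, Set.ncard_singleton]
      exact one_le_two
    exact (ncard_neighborSet_toSubgraph_eq_two hp hw hwu hwv).le
  · have : p.toSubgraph.neighborSet w = ∅ := Set.eq_empty_of_forall_notMem fun z hz =>
      hw (p.mem_verts_toSubgraph.mp (p.toSubgraph.edge_vert hz))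
    simp [this]

lemma start_eq_or_eq_of_edgeSet_eq {u' v' : V} {p : G.Walk u v} {q : G.Walk u' v'} (hp : p.IsPath)
    (hq : q.IsPath) (hnil : ¬ q.Nil) (h : p.edgeSet = q.edgeSet) : u' = u ∨ u' = v := by
  have neighborSet_eq : p.toSubgraph.neighborSet u' = q.toSubgraph.neighborSet u' := by
    ext z
    simp only [Subgraph.mem_neighborSet, Walk.adj_toSubgraph_iff_mem_edges, ← Walk.mem_edgeSet, h]
  have hu' : u' ∈ p.support := by
    have hmem : s(u', q.snd) ∈ p.edgeSet := h ▸ q.mk_start_snd_mem_edges hnil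
    exact p.fst_mem_support_of_mem_edges hmem
  by_contra! hne
  have := ncard_neighborSet_toSubgraph_eq_two hp hu' hne.1 hne.2
  rw [neighborSet_eq, hq.neighborSet_toSubgraph_startpoint hnil, Set.ncard_singleton] at this
  omega

lemma IsPathBetween.eq_and_eq_or_eq_and_eq {u' v' : V} {P : Set (Sym2 V)} (huv' : u' ≠ v')
    (h : IsPathBetween G u v P) (h' : IsPathBetween G u' v' P) :
    u' = u ∧ v' = v ∨ u' = v ∧ v' = u := by
  obtain ⟨p, hp, rfl⟩ := h
  obtain ⟨q, hq, hpq⟩ := h'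
  have hstart := start_eq_or_eq_of_edgeSet_eq hp hq (Walk.not_nil_of_ne huv') hpq.symm
  have hend := start_eq_or_eq_of_edgeSet_eq hp hq.reverse (Walk.not_nil_of_ne huv'.symm)
    (hpq.symm.trans q.edgeSet_reverse.symm)
  grind

lemma isSubtreeSet_edgeSet {p : G.Walk u v} (hnil : ¬ p.Nil) : IsSubtreeSet G p.edgeSet := by
  have edgeSet_subset : p.edgeSet ⊆ G.edgeSet := fun e he => p.edges_subset_edgeSet he
  have edges_mem : ∀ e ∈ p.edges, e ∈ (fromEdgeSet p.edgeSet).edgeSet := by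
    rw [edgeSet_fromEdgeSet_of_subset edgeSet_subset]
    exact fun e he => he
  have endpoints_eq :
      {w | ∃ e ∈ p.edgeSet, w ∈ e} = {w | w ∈ (p.transfer _ edges_mem).support} := by
    ext w
    rw [Set.mem_ofPred_eq, Set.mem_ofPred_eq, Walk.support_transfer]
    exact (Walk.mem_support_iff_exists_mem_edges_of_not_nil hnil).symm
  refine ⟨⟨_, p.mk_start_snd_mem_edges hnil⟩, edgeSet_subset, ?_⟩
  rw [endpoints_eq]
  exact (p.transfer _ edges_mem).connected_induce_support

lemma mem_support_of_adj_of_longest [Finite V] (hdeg : (H.neighborSet w).ncard ≤ 2)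
    {p : H.Walk u v} (hp : p.IsPath)
    (longest : ∀ (a b : V) (q : H.Walk a b), q.IsPath → q.length ≤ p.length)
    (hw : w ∈ p.support) (hwx : H.Adj w x) : x ∈ p.support := by
  by_contra hx
  by_cases hwu : w = u
  · subst hwu
    have := longest _ _ _ (hp.cons hx (h := hwx.symm))
    simp at this
  by_cases hwv : w = v
  · subst hwv
    have := longest _ _ _ (hp.concat hx hwx)
    simp at this
  have neighborSet_eq : p.toSubgraph.neighborSet w = H.neighborSet w :=
    Set.eq_of_subset_of_ncard_le (p.toSubgraph.neighborSet_subset w)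
      (hdeg.trans (ncard_neighborSet_toSubgraph_eq_two hp hw hwu hwv).ge)
  have hadj : x ∈ p.toSubgraph.neighborSet w := neighborSet_eq ▸ hwx
  exact hx (p.mem_verts_toSubgraph.mp (p.toSubgraph.edge_vert hadj.symm))

-- A longest path contains every neighbour of each of its vertices, hence by connectedness every
-- non-isolated vertex of `H`; having no chord, it then uses every edge.
lemma exists_isPath_edgeSet_eq [Finite V] (hH : H.IsAcyclic)
    (hconn : (H.induce H.support).Connected) (hdeg : ∀ w, (H.neighborSet w).ncard ≤ 2) :
    ∃ (u v : V) (p : H.Walk u v), u ≠ v ∧ p.IsPath ∧ p.edgeSet = H.edgeSet := by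
  obtain ⟨⟨a, b, hab⟩⟩ := hconn.nonempty
  have : Nonempty V := ⟨a⟩
  obtain ⟨u, v, p, hp, longest⟩ := Walk.exists_isPath_forall_isPath_length_le_length H
  have hnil : ¬ p.Nil :=
    Walk.not_nil_iff_lt_length.mpr (longest a b hab.toWalk (by simp [hab.ne]))
  have support_subset : ∀ w ∈ H.support, w ∈ p.support := fun w hw => by
    obtain ⟨q⟩ := hconn.preconnected ⟨u, p.snd, p.adj_snd hnil⟩ ⟨w, hw⟩
    by_contra hwp
    obtain ⟨d, -, hfst, hsnd⟩ := (q.map (Embedding.induce _).toHom).exists_boundary_dart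
      {w | w ∈ p.support} p.start_mem_support hwp
    exact hsnd (mem_support_of_adj_of_longest (hdeg _) hp longest hfst d.adj)
  refine ⟨u, v, p, fun h => hnil (hp.nil_iff_eq.mpr h), hp, ?_⟩
  refine Set.Subset.antisymm (fun e he => p.edges_subset_edgeSet he) (Sym2.ind fun w x hwx => ?_)
  exact (isChordless_of_isAcyclic hH p).mem_edges (support_subset w ⟨x, hwx⟩)
    (support_subset x ⟨w, H.adj_symm hwx⟩) hwx

lemma card_filter_mem_eq_ncard [DecidableEq V] (P : Finset (Sym2 V)) (w : V) :
    #{e ∈ P | w ∈ e} = {z | s(w, z) ∈ P}.ncard := by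
  rw [← Set.ncard_coe_finset,
    ← Set.ncard_image_of_injective (f := fun z => s(w, z)) _ fun _ _ => Sym2.congr_right.mp]
  congr
  ext e
  rw [coe_filter, Set.mem_ofPred_eq]
  constructor
  · rintro ⟨he, z, rfl⟩
    exact ⟨z, he, rfl⟩
  · rintro ⟨z, hz, rfl⟩
    exact ⟨hz, Sym2.mem_mk_left w z⟩

lemma support_eq_setOf_mem_edgeSet (H : SimpleGraph V) :
    H.support = {v | ∃ e ∈ H.edgeSet, v ∈ e} := by
  ext v
  constructor
  · rintro ⟨w, hvw⟩
    exact ⟨s(v, w), hvw, Sym2.mem_mk_left v w⟩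
  · rintro ⟨_, he, w, rfl⟩
    exact ⟨w, he⟩

lemma isSubtreeSet_and_degree_le_two_iff [Finite V] [DecidableEq V] (hG : G.IsAcyclic)
    {P : Finset (Sym2 V)} :
    (IsSubtreeSet G P ∧ ∀ w, #{e ∈ P | w ∈ e} ≤ 2) ↔ ∃ u v, u ≠ v ∧ IsPathBetween G u v P := by
  simp only [card_filter_mem_eq_ncard]
  constructor
  · rintro ⟨⟨-, hPG, hconn⟩, hdeg⟩
    set H := fromEdgeSet (P : Set (Sym2 V))
    have hle : H ≤ G := fromEdgeSet_le_of_subset hPG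
    have edgeSet_eq : H.edgeSet = P := edgeSet_fromEdgeSet_of_subset hPG
    have support_connected : (H.induce H.support).Connected := by
      rwa [support_eq_setOf_mem_edgeSet, edgeSet_eq]
    have neighborSet_eq (w : V) : H.neighborSet w = {z | s(w, z) ∈ P} := by
      ext z
      rw [mem_neighborSet, ← mem_edgeSet, edgeSet_eq, Set.mem_ofPred_eq, mem_coe]
    obtain ⟨u, v, p, huv, hp, hpP⟩ := exists_isPath_edgeSet_eq (hG.anti hle) support_connected
      fun w => neighborSet_eq w ▸ hdeg w
    exact ⟨u, v, huv, IsPathBetween.mono hle ⟨p, hp, hpP.trans edgeSet_eq⟩⟩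
  · rintro ⟨u, v, huv, p, hp, hpP⟩
    refine ⟨hpP ▸ isSubtreeSet_edgeSet (Walk.not_nil_of_ne huv), fun w => ?_⟩
    convert ncard_neighborSet_toSubgraph_le_two hp w
    ext z
    rw [Set.mem_ofPred_eq, ← mem_coe, ← hpP, Walk.mem_edgeSet, Subgraph.mem_neighborSet,
      Walk.adj_toSubgraph_iff_mem_edges]

end Paths

/-! ### The Hosoya polynomial -/

section Hosoya

open Polynomial

variable [Fintype V] [Fintype W] {G : SimpleGraph V} {u v : V}

open Classical in
lemma card_filter_isPathBetween_eq_two {P : Set (Sym2 V)} (huv : u ≠ v)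
    (hP : IsPathBetween G u v P) :
    #{p : V × V | p.1 ≠ p.2 ∧ IsPathBetween G p.1 p.2 P} = 2 := by
  refine card_eq_two.mpr ⟨(u, v), (v, u), fun h => huv (Prod.ext_iff.mp h).1, ?_⟩
  ext ⟨u', v'⟩
  simp only [mem_filter_univ, mem_insert, mem_singleton, Prod.mk.injEq]
  constructor
  · exact fun ⟨huv', hP'⟩ => hP.eq_and_eq_or_eq_and_eq huv' hP'
  · rintro (⟨rfl, rfl⟩ | ⟨rfl, rfl⟩)
    exacts [⟨huv, hP⟩, ⟨huv.symm, hP.symm⟩]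

open Classical in
lemma card_reachable_dist_eq (hG : G.IsAcyclic) {i : ℕ} (hi : 1 ≤ i) :
    #{p : V × V | G.Reachable p.1 p.2 ∧ G.dist p.1 p.2 = i} = 2 * pathCount G i := by
  have ne_of_dist {x y : V} (h : G.dist x y = i) : x ≠ y := by
    rintro rfl
    rw [dist_self] at h
    omega
  rw [pathCount, mul_comm, ← mul_one #{p : V × V | G.Reachable p.1 p.2 ∧ G.dist p.1 p.2 = i}]
  refine card_mul_eq_card_mul (fun p (P : Finset (Sym2 V)) => IsPathBetween G p.1 p.2 P)
    (fun p hp => ?_) fun P hP => ?_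
  · obtain ⟨hreach, hdist⟩ := (mem_filter_univ p).mp hp
    obtain ⟨P, hP, unique⟩ := existsUnique_isPathBetween hG hreach
    have hcard : #P = i := by rw [← Set.ncard_coe_finset, hP.ncard_eq_dist hG, hdist]
    refine card_eq_one.mpr ⟨P, eq_singleton_iff_unique_mem.mpr ⟨?_, fun Q hQ => ?_⟩⟩
    · simp only [mem_bipartiteAbove, mem_filter, powerset_univ, mem_univ, true_and]
      exact ⟨⟨hcard, (isSubtreeSet_and_degree_le_two_iff hG).mpr
        ⟨p.1, p.2, ne_of_dist hdist, hP⟩⟩, hP⟩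
    · exact unique Q ((mem_bipartiteAbove _).mp hQ).2
  · obtain ⟨hcard, hpath⟩ := (mem_filter.mp hP).2
    obtain ⟨u, v, huv, huvP⟩ := (isSubtreeSet_and_degree_le_two_iff hG).mp hpath
    rw [← card_filter_isPathBetween_eq_two huv huvP]
    congr 1
    ext p
    simp only [mem_bipartiteBelow, mem_filter_univ]
    refine and_congr_left fun hpP => ⟨fun h => ne_of_dist h.2, fun _ => ⟨hpP.reachable, ?_⟩⟩
    rw [← hpP.ncard_eq_dist hG, Set.ncard_coe_finset, hcard]

open Classical in
/-- The generating polynomial of the distances between ordered pairs of vertices of `G` in the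
same component: the Hosoya (or Wiener) polynomial, taken over ordered pairs, with the pairs
`(v, v)` included. -/
noncomputable def hosoyaPolynomial (G : SimpleGraph V) : ℤ[X] :=
  ∑ p : V × V with G.Reachable p.1 p.2, X ^ G.dist p.1 p.2

open Classical in
lemma coeff_hosoyaPolynomial (G : SimpleGraph V) (i : ℕ) : (hosoyaPolynomial G).coeff i =
    #{p : V × V | G.Reachable p.1 p.2 ∧ G.dist p.1 p.2 = i} := by
  simp [hosoyaPolynomial, coeff_X_pow, filter_filter, eq_comm]

lemma coeff_hosoyaPolynomial_of_isAcyclic (hG : G.IsAcyclic) {i : ℕ} (hi : 1 ≤ i) :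
    (hosoyaPolynomial G).coeff i = 2 * pathCount G i := by
  rw [coeff_hosoyaPolynomial, card_reachable_dist_eq hG hi, Nat.cast_mul, Nat.cast_ofNat]

open Classical in
lemma filter_reachable_eq_Icc (hG : G.IsAcyclic) {P : Finset (Sym2 V)}
    (hP : IsPathBetween G u v P) :
    G.edgeFinset.powerset.filter
        (fun A : Finset (Sym2 V) => (fromEdgeSet (A : Set (Sym2 V))).Reachable u v) =
      Icc P G.edgeFinset := by
  ext A
  rw [mem_filter, mem_powerset, mem_Icc, and_comm]
  refine and_congr_left fun hA => ?_
  have hAG : (A : Set (Sym2 V)) ⊆ G.edgeSet := by rwa [← coe_edgeFinset, coe_subset]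
  rw [hP.reachable_iff_subset hG (fromEdgeSet_le_of_subset hAG), edgeSet_fromEdgeSet_of_subset hAG,
    coe_subset]

open Classical in
lemma sum_powerset_mul_card_reachable {R : Type*} [CommSemiring R] (hG : G.IsAcyclic) (a b : R) :
    ∑ A ∈ G.edgeFinset.powerset, a ^ #A * b ^ (#G.edgeFinset - #A) *
        #{p : V × V | (fromEdgeSet (A : Set (Sym2 V))).Reachable p.1 p.2} =
      ∑ p : V × V with G.Reachable p.1 p.2,
        a ^ G.dist p.1 p.2 * (a + b) ^ (#G.edgeFinset - G.dist p.1 p.2) := by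
  have reachable_mono {A : Finset (Sym2 V)} (hA : A ⊆ G.edgeFinset) {p : V × V} :
      (fromEdgeSet (A : Set (Sym2 V))).Reachable p.1 p.2 → G.Reachable p.1 p.2 :=
    Reachable.mono (fromEdgeSet_le_of_subset (by rwa [← coe_edgeFinset, coe_subset]))
  calc
    _ = ∑ A ∈ G.edgeFinset.powerset,
        ∑ p : V × V with (fromEdgeSet (A : Set (Sym2 V))).Reachable p.1 p.2,
          a ^ #A * b ^ (#G.edgeFinset - #A) := by
      simp only [sum_const, nsmul_eq_mul, mul_comm]
    _ = ∑ p : V × V with G.Reachable p.1 p.2,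
        ∑ A ∈ G.edgeFinset.powerset.filter
            (fun A : Finset (Sym2 V) => (fromEdgeSet (A : Set (Sym2 V))).Reachable p.1 p.2),
          a ^ #A * b ^ (#G.edgeFinset - #A) := by
      refine sum_comm' fun A p => ?_
      simp only [mem_filter, mem_powerset, mem_univ, true_and]
      exact ⟨fun h => ⟨h, reachable_mono h.1 h.2⟩, And.left⟩
    _ = ∑ p : V × V with G.Reachable p.1 p.2,
        a ^ G.dist p.1 p.2 * (a + b) ^ (#G.edgeFinset - G.dist p.1 p.2) := by
      refine sum_congr rfl fun p hp => ?_
      obtain ⟨P, hP, -⟩ := existsUnique_isPathBetween hG ((mem_filter_univ p).mp hp)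
      have hPG : P ⊆ G.edgeFinset := by
        rw [← coe_subset, coe_edgeFinset]
        exact hP.subset_edgeSet
      rw [filter_reachable_eq_Icc hG hP, sum_Icc_pow_mul_pow hPG, ← hP.ncard_eq_dist hG,
        Set.ncard_coe_finset]

open Classical in
lemma hosoyaPolynomial_eq_sum_edgeSetType (hG : G.IsAcyclic) :
    hosoyaPolynomial G = ((G.edgeFinset.powerset.val.map edgeSetType).map fun lam : Multiset ℕ =>
      (X : ℤ[X]) ^ (Fintype.card V - lam.card) *
        (1 - X) ^ (#G.edgeFinset - (Fintype.card V - lam.card)) *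
          (((lam.map (· ^ 2)).sum : ℕ) : ℤ[X])).sum := by
  have specialized := sum_powerset_mul_card_reachable hG (X : ℤ[X]) (1 - X)
  simp only [add_sub_cancel, one_pow, mul_one] at specialized
  rw [hosoyaPolynomial, ← specialized, Multiset.map_map, ← sum_eq_multiset_sum]
  refine sum_congr rfl fun A hA => ?_
  have hAG : (A : Set (Sym2 V)) ⊆ G.edgeSet := by
    rwa [mem_powerset, ← coe_subset, coe_edgeFinset] at hA
  rw [Function.comp_apply, sum_map_sq_edgeSetType, ← card_add_card_edgeSetType hG hAG,
    Nat.add_sub_cancel]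

open Classical in
lemma hosoyaPolynomial_eq_of_map_edgeSetType_eq {T : SimpleGraph V} {U : SimpleGraph W}
    (hT : T.IsAcyclic) (hU : U.IsAcyclic)
    (h : T.edgeFinset.powerset.val.map edgeSetType = U.edgeFinset.powerset.val.map edgeSetType) :
    hosoyaPolynomial T = hosoyaPolynomial U := by
  have card_vertices : Fintype.card V = Fintype.card W := by
    have mem_types : edgeSetType ∅ ∈ U.edgeFinset.powerset.val.map edgeSetType :=
      h ▸ Multiset.mem_map_of_mem edgeSetType (empty_mem_powerset T.edgeFinset)
    obtain ⟨A, -, hA⟩ := Multiset.mem_map.mp mem_types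
    rw [← sum_edgeSetType A, hA, sum_edgeSetType]
  have card_edges : #T.edgeFinset = #U.edgeFinset := by
    have two_pow_eq := congrArg Multiset.card h
    simp only [Multiset.card_map, card_val, card_powerset] at two_pow_eq
    exact Nat.pow_right_injective le_rfl two_pow_eq
  rw [hosoyaPolynomial_eq_sum_edgeSetType hT, hosoyaPolynomial_eq_sum_edgeSetType hU, h,
    card_vertices, card_edges]

end Hosoya

theorem stmt_11_general [Fintype V] [Fintype W] (T : SimpleGraph V) (U : SimpleGraph W)
    (hT : T.IsAcyclic) (hU : U.IsAcyclic) (n : ℕ)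
    (hVn : Fintype.card V = n) (hWn : Fintype.card W = n)
    (hN : ∀ lam : Multiset ℕ, lam.sum = n → (∀ m ∈ lam, 0 < m) →
      NCoeff T lam = NCoeff U lam) :
    ∀ i : ℕ, 1 ≤ i → pathCount T i = pathCount U i := by
  intro i hi
  have hosoya_eq : hosoyaPolynomial T = hosoyaPolynomial U :=
    hosoyaPolynomial_eq_of_map_edgeSetType_eq hT hU
      (map_edgeSetType_eq_of_NCoeff_eq hVn hWn hN)
  have coeff_eq := congrArg (Polynomial.coeff · i) hosoya_eq
  simp only [coeff_hosoyaPolynomial_of_isAcyclic hT hi,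
    coeff_hosoyaPolynomial_of_isAcyclic hU hi] at coeff_eq
  omega

/-- Let `T` and `U` be trees, each with `n` vertices, with `N_λ(T) = N_λ(U)` for every
partition `λ` of `n` (equivalently, `X_T = X_U`).  Then for every `i ≥ 1` the trees `T` and `U`
have the same number of `i`-edge paths. -/
theorem stmt_11 [Fintype V] [Fintype W] (T : SimpleGraph V) (U : SimpleGraph W)
    (hT : T.IsTree) (hU : U.IsTree) (n : ℕ)
    (hVn : Fintype.card V = n) (hWn : Fintype.card W = n)
    (hN : ∀ lam : Multiset ℕ, lam.sum = n → (∀ m ∈ lam, 0 < m) →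
      NCoeff T lam = NCoeff U lam) :
    ∀ i : ℕ, 1 ≤ i → pathCount T i = pathCount U i :=
  stmt_11_general T U hT.isAcyclic hU.isAcyclic n hVn hWn hN
end

section
/- Let T be a spider with n vertices and let t be its torso (the unique vertex of degree at least 3), so that the legs of T are the paths from t to the leaves and the leg containing a leaf v has length dist(t, v). Suppose the maximum leg length λ_1 satisfies 2·λ_1 ≤ n. Then for every integer a ≥ 1, the number of edges e ∈ E(T) such that the smaller of the two connected components of T − e has exactly a vertices equals the number of leaves v of T with dist(t, v) ≥ a (i.e., the a-th part of the conjugate of the partition of leg lengths). -/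
open SimpleGraph Finset

variable {V : Type*}

/-- `minSide T e` : the minimum of the orders of the connected components of `T − e`. -/
noncomputable def minSide [Fintype V] (T : SimpleGraph V) (e : Sym2 V) : ℕ :=
  sInf {m : ℕ | ∃ c : (T.deleteEdges {e}).ConnectedComponent, c.supp.ncard = m}

/-!
Root the tree at the torso `t`. Every edge joins a unique non-root vertex `v` to its parent, and
deleting it separates the descendants of `v` from all other vertices. In a spider the descendants
of the `k`-th ancestor of a leaf `w` are the `k + 1` vertices between them on the leg of `w`, and
these are at most half of all vertices because the leg is. So an edge has smaller side `k + 1`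
exactly when it joins the `k`-th ancestor of a leaf to its parent, and each leg of length at least
`k + 1` contains exactly one such edge.
-/

/-- The parent of `v` in the graph `T` rooted at `t`: a neighbour of `v` that is one step closer to
`t`. The root and the vertices not reachable from it have no such neighbour and are their own
parents. -/
noncomputable def parent (T : SimpleGraph V) (t v : V) : V :=
  open Classical in
  if h : ∃ u, T.Adj v u ∧ T.dist t v = T.dist t u + 1 then h.choose else v

/-- The edge joining `v` to its parent; a diagonal element of `Sym2 V` if `v` is its own
parent. -/
noncomputable def parentEdge (T : SimpleGraph V) (t v : V) : Sym2 V :=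
  s(v, parent T t v)

/-- The descendants of `v` in the graph `T` rooted at `t`, among them `v` itself. -/
def descendants (T : SimpleGraph V) (t v : V) : Set V :=
  {x | ∃ j, (parent T t)^[j] x = v}

section RootedGraph

variable {T : SimpleGraph V} {t u v : V}

lemma ne_root_of_dist_pos (hv : 0 < T.dist t v) : v ≠ t :=
  (dist_ne_zero_iff_ne_and_reachable.1 hv.ne').1.symm

lemma exists_adj_dist_eq_add_one (hv : 0 < T.dist t v) :
    ∃ u, T.Adj v u ∧ T.dist t v = T.dist t u + 1 := by
  obtain ⟨p, hp⟩ := (Reachable.of_dist_ne_zero hv.ne').exists_walk_length_eq_dist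
  have hadj : T.Adj p.penultimate v := p.adj_penultimate (by rw [← Walk.length_eq_zero_iff]; lia)
  have hpen : T.dist t p.penultimate + 1 ≤ T.dist t v := by
    rw [← hp, ← congrArg Walk.length (p.concat_dropLast hadj), Walk.length_concat]
    exact Nat.add_le_add_right (T.dist_le _) 1
  refine ⟨p.penultimate, hadj.symm, ?_⟩
  rcases hadj.diff_dist_adj (u := t) with h | h | h <;> lia

lemma parent_of_dist_eq_zero (hv : T.dist t v = 0) : parent T t v = v :=
  dif_neg fun ⟨_, _, h⟩ => by lia

lemma adj_parent (hv : 0 < T.dist t v) : T.Adj v (parent T t v) := by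
  rw [parent, dif_pos (exists_adj_dist_eq_add_one hv)]
  exact (exists_adj_dist_eq_add_one hv).choose_spec.1

lemma dist_parent (v : V) : T.dist t (parent T t v) = T.dist t v - 1 := by
  rcases (T.dist t v).eq_zero_or_pos with hv | hv
  · rw [parent_of_dist_eq_zero hv, hv]
  · rw [parent, dif_pos (exists_adj_dist_eq_add_one hv)]
    have := (exists_adj_dist_eq_add_one hv).choose_spec.2
    lia

lemma dist_iterate_parent (k : ℕ) (v : V) :
    T.dist t ((parent T t)^[k] v) = T.dist t v - k := by
  induction k with
  | zero => rfl
  | succ k ih => rw [Function.iterate_succ_apply', dist_parent, ih, Nat.sub_sub]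

lemma parentEdge_injOn : Set.InjOn (parentEdge T t) {v | 0 < T.dist t v} := by
  intro v (hv : 0 < T.dist t v) w _ h
  rcases Sym2.eq_iff.1 h with ⟨hvw, -⟩ | ⟨hvw, hwv⟩
  · exact hvw
  · have hdv := congrArg (T.dist t) hvw
    have hdw := congrArg (T.dist t) hwv
    rw [dist_parent] at hdv hdw
    lia

lemma parentEdge_mem_edgeSet (hv : 0 < T.dist t v) : parentEdge T t v ∈ T.edgeSet :=
  adj_parent hv

lemma eq_parent_of_adj_of_dist_eq (hT : T.IsAcyclic) (hadj : T.Adj v u)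
    (hdist : T.dist t v = T.dist t u + 1) : u = parent T t v := by
  have shortestWalk_through {x : V} (hx : T.Adj v x) (hdx : T.dist t v = T.dist t x + 1) :
      ∃ p : T.Path t v, p.1.penultimate = x := by
    have hreach : T.Reachable t x :=
      (Reachable.of_dist_ne_zero (by lia)).trans hx.reachable
    obtain ⟨q, hq⟩ := hreach.exists_walk_length_eq_dist
    have hpath : (q.concat hx.symm).IsPath :=
      Walk.isPath_of_length_eq_dist _ (by rw [Walk.length_concat, hq, hdx])
    exact ⟨⟨_, hpath⟩, q.penultimate_concat hx.symm⟩
  have hv : 0 < T.dist t v := by lia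
  obtain ⟨p, hp⟩ := shortestWalk_through hadj hdist
  obtain ⟨q, hq⟩ := shortestWalk_through (adj_parent hv) (by rw [dist_parent]; lia)
  rw [← hp, ← hq, (hT.subsingleton_path t v).elim p q]

lemma eq_parent_or_eq_parent_of_adj (hT : T.IsTree) (t : V) (h : T.Adj v u) :
    u = parent T t v ∨ v = parent T t u :=
  (hT.dist_eq_dist_add_one_of_adj t h).imp (eq_parent_of_adj_of_dist_eq hT.isAcyclic h)
    (eq_parent_of_adj_of_dist_eq hT.isAcyclic h.symm)

lemma exists_parentEdge_eq (hT : T.IsTree) (t : V) {e : Sym2 V} (he : e ∈ T.edgeSet) :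
    ∃ v, 0 < T.dist t v ∧ parentEdge T t v = e := by
  induction e with | h v u
  have hadj : T.Adj v u := he
  rcases hT.dist_eq_dist_add_one_of_adj t hadj with h | h
  · exact ⟨v, by lia, by rw [parentEdge, ← eq_parent_of_adj_of_dist_eq hT.isAcyclic hadj h]⟩
  · exact ⟨u, by lia, by
      rw [parentEdge, ← eq_parent_of_adj_of_dist_eq hT.isAcyclic hadj.symm h, Sym2.eq_swap]⟩

end RootedGraph

section Descendants

variable {T : SimpleGraph V} {t v x : V}

lemma self_mem_descendants : v ∈ descendants T t v :=
  ⟨0, rfl⟩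

lemma dist_le_of_mem_descendants (hx : x ∈ descendants T t v) : T.dist t v ≤ T.dist t x := by
  obtain ⟨j, rfl⟩ := hx
  rw [dist_iterate_parent]
  exact Nat.sub_le _ _

lemma mem_descendants_iff :
    x ∈ descendants T t v ↔ x = v ∨ parent T t x ∈ descendants T t v := by
  constructor
  · rintro ⟨_ | j, hj⟩
    · exact .inl hj
    · exact .inr ⟨j, hj⟩
  · rintro (rfl | ⟨j, hj⟩)
    · exact self_mem_descendants
    · exact ⟨j + 1, hj⟩

lemma parent_notMem_descendants (hv : 0 < T.dist t v) :
    parent T t v ∉ descendants T t v := fun h => by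
  have := dist_le_of_mem_descendants h
  rw [dist_parent] at this
  lia

lemma adj_parent_deleteEdges_parentEdge (hx : 0 < T.dist t x) (hv : 0 < T.dist t v)
    (hxv : x ≠ v) :
    (T.deleteEdges {parentEdge T t v}).Adj x (parent T t x) :=
  deleteEdges_adj.2 ⟨adj_parent hx, fun h => hxv (parentEdge_injOn hx hv h)⟩

lemma reachable_deleteEdges_of_mem_descendants (hv : 0 < T.dist t v)
    (hx : x ∈ descendants T t v) : (T.deleteEdges {parentEdge T t v}).Reachable x v := by
  obtain ⟨j, hj⟩ := hx
  induction j generalizing x with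
  | zero => rw [← hj]; rfl
  | succ j ih =>
    by_cases hxv : x = v
    · rw [hxv]
    · have hx : 0 < T.dist t x := hv.trans_le (dist_le_of_mem_descendants ⟨j + 1, hj⟩)
      exact (adj_parent_deleteEdges_parentEdge hx hv hxv).reachable.trans (ih hj)

lemma reachable_deleteEdges_root_of_notMem_descendants (hT : T.Connected) (hv : 0 < T.dist t v)
    (hx : x ∉ descendants T t v) : (T.deleteEdges {parentEdge T t v}).Reachable x t := by
  induction hn : T.dist t x generalizing x with
  | zero => rw [hT.dist_eq_zero_iff.1 hn]
  | succ n ih =>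
    rw [mem_descendants_iff, not_or] at hx
    have hadj := adj_parent_deleteEdges_parentEdge (by lia) hv hx.1
    exact hadj.reachable.trans (ih hx.2 (by rw [dist_parent, hn, Nat.add_sub_cancel]))

lemma not_reachable_deleteEdges_parentEdge (hT : T.IsTree) (hv : 0 < T.dist t v) :
    ¬(T.deleteEdges {parentEdge T t v}).Reachable v t := fun h =>
  isBridge_iff.1 (isAcyclic_iff_forall_adj_isBridge.1 hT.isAcyclic (adj_parent hv)) <|
    h.trans (reachable_deleteEdges_root_of_notMem_descendants hT.connected hv
      (parent_notMem_descendants hv)).symm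

lemma supp_connectedComponentMk_deleteEdges_parentEdge (hT : T.IsTree) (hv : 0 < T.dist t v) :
    ((T.deleteEdges {parentEdge T t v}).connectedComponentMk v).supp = descendants T t v := by
  ext x
  rw [ConnectedComponent.mem_supp_iff, ConnectedComponent.eq]
  refine ⟨fun hxv => by_contra fun hx => not_reachable_deleteEdges_parentEdge hT hv ?_,
    reachable_deleteEdges_of_mem_descendants hv⟩
  exact hxv.symm.trans (reachable_deleteEdges_root_of_notMem_descendants hT.connected hv hx)

lemma supp_connectedComponentMk_root_deleteEdges_parentEdge (hT : T.IsTree)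
    (hv : 0 < T.dist t v) :
    ((T.deleteEdges {parentEdge T t v}).connectedComponentMk t).supp = (descendants T t v)ᶜ := by
  ext x
  rw [ConnectedComponent.mem_supp_iff, ConnectedComponent.eq, Set.mem_compl_iff]
  refine ⟨fun hxt hx => not_reachable_deleteEdges_parentEdge hT hv ?_,
    reachable_deleteEdges_root_of_notMem_descendants hT.connected hv⟩
  exact (reachable_deleteEdges_of_mem_descendants hv hx).symm.trans hxt

lemma minSide_parentEdge [Fintype V] (hT : T.IsTree) (hv : 0 < T.dist t v) :
    minSide T (parentEdge T t v) =
      min (descendants T t v).ncard (descendants T t v)ᶜ.ncard := by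
  have hcomponent (c : (T.deleteEdges {parentEdge T t v}).ConnectedComponent) :
      c = connectedComponentMk _ v ∨ c = connectedComponentMk _ t := by
    induction c using ConnectedComponent.ind with | _ x
    by_cases hx : x ∈ descendants T t v
    · exact .inl (ConnectedComponent.sound (reachable_deleteEdges_of_mem_descendants hv hx))
    · exact .inr (ConnectedComponent.sound
        (reachable_deleteEdges_root_of_notMem_descendants hT.connected hv hx))
  rw [minSide, ← csInf_pair, ← supp_connectedComponentMk_root_deleteEdges_parentEdge hT hv]
  congr 1
  ext m
  constructor
  · rintro ⟨c, rfl⟩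
    rcases hcomponent c with rfl | rfl
    · exact .inl (by rw [supp_connectedComponentMk_deleteEdges_parentEdge hT hv])
    · exact .inr rfl
  · rintro (rfl | rfl)
    · exact ⟨_, by rw [supp_connectedComponentMk_deleteEdges_parentEdge hT hv]⟩
    · exact ⟨_, rfl⟩

lemma minSide_parentEdge_of_two_mul_ncard_le [Fintype V] (hT : T.IsTree) (hv : 0 < T.dist t v)
    (hcard : 2 * (descendants T t v).ncard ≤ Fintype.card V) :
    minSide T (parentEdge T t v) = (descendants T t v).ncard := by
  rw [minSide_parentEdge hT hv, Set.ncard_compl, Nat.card_eq_fintype_card]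
  lia

end Descendants

section Leaves

variable {T : SimpleGraph V} [T.LocallyFinite] {t v x y : V}

lemma parent_ne_of_degree_eq_one (hv : 0 < T.dist t v) (hdeg : T.degree v = 1) (u : V) :
    parent T t u ≠ v := by
  rintro rfl
  rw [dist_parent] at hv
  obtain ⟨z, -, hz⟩ := degree_eq_one_iff_existsUnique_adj.1 hdeg
  have hu := hz u (adj_parent (by lia)).symm
  have hpu := hz _ (adj_parent (t := t) (by rw [dist_parent]; lia))
  have hdist := congrArg (T.dist t) (hpu.trans hu.symm)
  rw [dist_parent, dist_parent] at hdist
  lia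

lemma degree_eq_one_of_forall_parent_ne (hT : T.IsTree) (hv : 0 < T.dist t v)
    (h : ∀ u, parent T t u ≠ v) : T.degree v = 1 :=
  degree_eq_one_iff_existsUnique_adj.2 ⟨parent T t v, adj_parent hv, fun u hu =>
    (eq_parent_or_eq_parent_of_adj hT t hu).resolve_right fun hvu => h u hvu.symm⟩

lemma descendants_of_degree_eq_one (hv : 0 < T.dist t v) (hdeg : T.degree v = 1) :
    descendants T t v = {v} := by
  refine Set.eq_singleton_iff_unique_mem.2 ⟨self_mem_descendants, ?_⟩
  rintro x ⟨_ | j, hj⟩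
  · exact hj
  · rw [Function.iterate_succ_apply'] at hj
    exact absurd hj (parent_ne_of_degree_eq_one hv hdeg _)

lemma exists_degree_eq_one_iterate_parent_eq [Finite V] (hT : T.IsTree)
    (hv : 0 < T.dist t v) : ∃ w k, T.degree w = 1 ∧ (parent T t)^[k] w = v := by
  obtain ⟨w, ⟨k, hk⟩, hmax⟩ := Set.exists_max_image (descendants T t v) (T.dist t)
    (Set.toFinite _) ⟨v, self_mem_descendants⟩
  have hw : 0 < T.dist t w := hv.trans_le (dist_le_of_mem_descendants ⟨k, hk⟩)
  refine ⟨w, k, degree_eq_one_of_forall_parent_ne hT hw ?_, hk⟩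
  rintro u rfl
  have hu := hmax u ⟨k + 1, hk⟩
  rw [dist_parent] at hu hw
  lia

lemma eq_of_parent_eq_of_degree_le_two (hdeg : T.degree v ≤ 2) (hv : 0 < T.dist t v)
    (hx : parent T t x = v) (hy : parent T t y = v) : x = y := by
  classical
  by_contra hxy
  have hdx := dist_parent (T := T) (t := t) x
  have hdy := dist_parent (T := T) (t := t) y
  have hdv := dist_parent (T := T) (t := t) v
  rw [hx] at hdx
  rw [hy] at hdy
  have hneighbors : {x, y, parent T t v} ⊆ T.neighborFinset v := by
    simp only [Finset.insert_subset_iff, Finset.singleton_subset_iff, mem_neighborFinset]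
    exact ⟨hx ▸ (adj_parent (by lia)).symm, hy ▸ (adj_parent (by lia)).symm, adj_parent hv⟩
  have hcard : #{x, y, parent T t v} = 3 :=
    Finset.card_eq_three.2 ⟨x, y, _, hxy, by rintro rfl; lia, by rintro rfl; lia, rfl⟩
  have := Finset.card_le_card hneighbors
  rw [card_neighborFinset_eq_degree] at this
  lia

lemma descendants_parent_of_degree_le_two (hdeg : T.degree (parent T t v) ≤ 2)
    (hv : 0 < T.dist t (parent T t v)) :
    descendants T t (parent T t v) = insert (parent T t v) (descendants T t v) := by
  ext x
  constructor
  · rintro ⟨_ | j, hj⟩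
    · exact .inl hj
    · rw [Function.iterate_succ_apply'] at hj
      exact .inr ⟨j, eq_of_parent_eq_of_degree_le_two hdeg hv hj rfl⟩
  · rintro (rfl | ⟨j, hj⟩)
    · exact self_mem_descendants
    · exact ⟨j + 1, by rw [Function.iterate_succ_apply', hj]⟩

end Leaves

section Legs

variable {T : SimpleGraph V} [T.LocallyFinite] {t w : V} {k : ℕ}

lemma iterate_parent_injOn (hdeg : ∀ v ≠ t, T.degree v ≤ 2) (k : ℕ) :
    Set.InjOn (parent T t)^[k] {v | k < T.dist t v} := by
  induction k with
  | zero => exact Set.injOn_id _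
  | succ k ih =>
    intro v (hv : k + 1 < T.dist t v) w (hw : k + 1 < T.dist t w) h
    have hpos : 0 < T.dist t ((parent T t)^[k + 1] v) := by rw [dist_iterate_parent]; lia
    have hdegree := hdeg _ (ne_root_of_dist_pos hpos)
    rw [Function.iterate_succ_apply'] at hpos hdegree
    rw [Function.iterate_succ_apply', Function.iterate_succ_apply'] at h
    exact ih (Nat.lt_of_succ_lt hv) (Nat.lt_of_succ_lt hw)
      (eq_of_parent_eq_of_degree_le_two hdegree hpos rfl h.symm)

lemma ncard_descendants_iterate_parent [Finite V] (hdeg : ∀ v ≠ t, T.degree v ≤ 2)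
    (hw : T.degree w = 1) (hk : k < T.dist t w) :
    (descendants T t ((parent T t)^[k] w)).ncard = k + 1 := by
  induction k with
  | zero =>
    rw [Function.iterate_zero_apply, descendants_of_degree_eq_one hk hw, Set.ncard_singleton]
  | succ k ih =>
    have hpos : 0 < T.dist t ((parent T t)^[k] w) := by rw [dist_iterate_parent]; lia
    have hpos' : 0 < T.dist t (parent T t ((parent T t)^[k] w)) := by
      rw [dist_parent, dist_iterate_parent]; lia
    rw [Function.iterate_succ_apply',
      descendants_parent_of_degree_le_two (hdeg _ (ne_root_of_dist_pos hpos')) hpos',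
      Set.ncard_insert_of_notMem (parent_notMem_descendants hpos), ih (by lia)]

lemma minSide_parentEdge_iterate_parent [Fintype V] (hT : T.IsTree)
    (hdeg : ∀ v ≠ t, T.degree v ≤ 2) (hw : T.degree w = 1) (hk : k < T.dist t w)
    (hcard : 2 * (k + 1) ≤ Fintype.card V) :
    minSide T (parentEdge T t ((parent T t)^[k] w)) = k + 1 := by
  have hncard := ncard_descendants_iterate_parent hdeg hw hk
  rw [minSide_parentEdge_of_two_mul_ncard_le hT, hncard]
  · rw [dist_iterate_parent]; lia
  · rwa [hncard]

lemma setOf_minSide_eq_image_parentEdge [Fintype V] (hT : T.IsTree)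
    (hdeg : ∀ v ≠ t, T.degree v ≤ 2)
    (hlegs : ∀ v, T.degree v = 1 → 2 * T.dist t v ≤ Fintype.card V) (k : ℕ) :
    {e | e ∈ T.edgeSet ∧ minSide T e = k + 1} =
      (fun w => parentEdge T t ((parent T t)^[k] w)) ''
        {w | T.degree w = 1 ∧ k + 1 ≤ T.dist t w} := by
  have hminSide {w : V} {j : ℕ} (hw : T.degree w = 1) (hj : j < T.dist t w) :
      minSide T (parentEdge T t ((parent T t)^[j] w)) = j + 1 :=
    minSide_parentEdge_iterate_parent hT hdeg hw hj (by have := hlegs w hw; lia)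
  ext e
  constructor
  · rintro ⟨he, hside⟩
    obtain ⟨v, hv, rfl⟩ := exists_parentEdge_eq hT t he
    obtain ⟨w, j, hw, rfl⟩ := exists_degree_eq_one_iterate_parent_eq hT hv
    rw [dist_iterate_parent] at hv
    obtain rfl : j = k := by
      rw [hminSide hw (by lia)] at hside
      lia
    exact ⟨w, ⟨hw, by lia⟩, rfl⟩
  · rintro ⟨w, ⟨hw, hk⟩, rfl⟩
    exact ⟨parentEdge_mem_edgeSet (by rw [dist_iterate_parent]; lia), hminSide hw hk⟩

end Legs

theorem stmt_15_general [Fintype V] (T : SimpleGraph V) [T.LocallyFinite]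
    (hT : T.IsTree) (t : V) (hdeg : ∀ v ≠ t, T.degree v ≤ 2)
    (hlegs : ∀ v : V, T.degree v = 1 → 2 * T.dist t v ≤ Fintype.card V)
    (a : ℕ) (ha : 1 ≤ a) :
    {e : Sym2 V | e ∈ T.edgeSet ∧ minSide T e = a}.ncard =
      {v : V | T.degree v = 1 ∧ a ≤ T.dist t v}.ncard := by
  obtain ⟨k, rfl⟩ := Nat.exists_eq_add_of_le' ha
  have hancestor : Set.MapsTo (parent T t)^[k] {v | k < T.dist t v} {v | 0 < T.dist t v} :=
    fun v hv => by simpa only [Set.mem_ofPred_eq, dist_iterate_parent, Nat.sub_pos_iff_lt] using hv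
  have hinj := parentEdge_injOn.comp (iterate_parent_injOn hdeg k) hancestor
  rw [setOf_minSide_eq_image_parentEdge hT hdeg hlegs k]
  exact (hinj.mono fun v hv => hv.2).ncard_image

/-- Let `T` be a spider with `n` vertices and torso `t` (its unique vertex of degree ≥ 3), so
the legs of `T` are the paths from `t` to the leaves and the leg through a leaf `v` has length
`dist(t,v)`.  Suppose the maximum leg length `λ₁` satisfies `2·λ₁ ≤ n`.  Then for every
`a ≥ 1`, the number of edges `e` such that the smaller component of `T − e` has exactly `a`
vertices equals the number of leaves `v` with `dist(t,v) ≥ a` (the `a`-th part of the conjugate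
of the partition of leg lengths). -/
theorem stmt_15 [Fintype V] (T : SimpleGraph V) [DecidableRel T.Adj]
    (hT : T.IsTree) (t : V)
    (ht3 : 3 ≤ T.degree t) (htuniq : ∀ v : V, 3 ≤ T.degree v → v = t)
    (hlegs : ∀ v : V, T.degree v = 1 → 2 * T.dist t v ≤ Fintype.card V)
    (a : ℕ) (ha : 1 ≤ a) :
    {e : Sym2 V | e ∈ T.edgeSet ∧ minSide T e = a}.ncard =
      {v : V | T.degree v = 1 ∧ a ≤ T.dist t v}.ncard := by
  have hdeg (v : V) (hv : v ≠ t) : T.degree v ≤ 2 :=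
    Nat.le_of_lt_succ (not_le.1 (mt (htuniq v) hv))
  exact stmt_15_general T hT t hdeg hlegs a ha
end
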